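/- Let M ≥ 0, N ≥ 1, ℓ ∈ ℂ^N, k ∈ I_{M,N}, j ∈ {1,…,M}, x ∈ ℂ^M and t ∈ ℂ^N. At every point where all factors occurring in the denominators of w_k(x;t), of w_k(x−τe_j;t), and of the right-hand side are nonzero, one has w_k(x − τ e_j; t) = (∏_{s=1}^N [sinh(t_s + x_j + ℓ_s η)/sinh(t_s + x_j − ℓ_s η)] · [sinh(t_s − x_j − ℓ_s η + τ)/sinh(t_s − x_j + ℓ_s η + τ)]) · [sinh(x_j + ξ̃₊)/sinh(x_j − ξ̃₊ − τ)] · [sinh(x_j + ξ̃₋)/sinh(x_j − ξ̃₋ − τ)] · (∏_{i ≠ j} [sinh(x_j + x_i − τ)/sinh(x_j + x_i)] · [sinh(x_j − x_i − τ)/sinh(x_j − x_i)] · [sinh(x_j + x_i − η)/sinh(x_j + x_i + η − τ)] · [sinh(x_j − x_i − η)/sinh(x_j − x_i + η − τ)]) · w_k(x; t), where e_j is the j-th standard basis vector of ℂ^M. -/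

import Mathlib

open Complex MeasureTheory

noncomputable section

namespace BQKZ

/-- `(z;p)_∞ = ∏_{m ≥ 0} (1 - z pᵐ)`; used with `p = q²`. -/
def poch (p z : ℂ) : ℂ := ∏' m : ℕ, (1 - z * p ^ m)

/-- renormalized Jacobi theta `θ(z) = (z;p)_∞ (p z⁻¹;p)_∞`, with `p = q²`. -/
def theta (p z : ℂ) : ℂ := poch p z * poch p (p * z⁻¹)

/-- `q² = e^{2τ}` where `q = e^τ`. -/
def qsq (τ : ℂ) : ℂ := exp (2 * τ)

/-- `ξ̃₊ = ξ₊ - η/2 - τ/2`. -/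
def xiP (τ η ξp : ℂ) : ℂ := ξp - η / 2 - τ / 2

/-- `ξ̃₋ = ξ₋ - η/2`. -/
def xiM (η ξm : ℂ) : ℂ := ξm - η / 2

/-- `n_k(r) = #{i : k i = r}`. -/
def nk {M N : ℕ} (k : Fin M → Fin N) (r : Fin N) : ℕ :=
  (Finset.univ.filter fun i => k i = r).card

/-- `φ_{k;r}`. -/
def phiC (η ξp ξm : ℂ) {N M : ℕ} (ℓ : Fin N → ℂ) (k : Fin M → Fin N) (r : Fin N) : ℂ :=
  (∏ i ∈ Finset.univ.filter fun i : Fin M => k i = r,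
      exp (2 * (η - ξp - ξm) +
        4 * ((M : ℂ) - ((i : ℕ) + 1) - ∑ s ∈ Finset.univ.filter fun s : Fin N => r ≤ s, ℓ s) * η)) *
    exp (-4 * ℓ r * η * ((Finset.univ.filter fun i : Fin M => r < k i).card : ℂ))

/-- `Φ_k(t)`. -/
def PhiF (τ η ξp ξm : ℂ) {N M : ℕ} (ℓ : Fin N → ℂ) (k : Fin M → Fin N) (t : Fin N → ℂ) : ℂ :=
  ∏ r, theta (qsq τ) (exp (2 * t r)) / theta (qsq τ) (phiC η ξp ξm ℓ k r * exp (2 * t r))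

/-- `F(x;t)`. -/
def Ffun (τ η : ℂ) {N : ℕ} (ℓ : Fin N → ℂ) (x : ℂ) (t : Fin N → ℂ) : ℂ :=
  ∏ s, (poch (qsq τ) (exp (-2 * (t s + x - ℓ s * η))) * poch (qsq τ) (exp (-2 * (t s - x - ℓ s * η)))) /
       (poch (qsq τ) (exp (-2 * (t s + x + ℓ s * η))) * poch (qsq τ) (exp (-2 * (t s - x + ℓ s * η))))

/-- `g(x)`. -/
def gfun (τ η ξp ξm : ℂ) (x : ℂ) : ℂ :=
  (poch (qsq τ) (qsq τ * exp (2 * (xiP τ η ξp - x))) * poch (qsq τ) (qsq τ * exp (2 * (xiM η ξm - x)))) /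
  (poch (qsq τ) (exp (2 * (-xiP τ η ξp - x))) * poch (qsq τ) (exp (2 * (-xiM η ξm - x))))

/-- `h(x)`. -/
def hfun (τ η : ℂ) (x : ℂ) : ℂ :=
  (1 - exp (-2 * x)) * poch (qsq τ) (qsq τ * exp (-2 * (x + η))) / poch (qsq τ) (exp (-2 * (x - η)))

/-- `ψ_{k;i}`. -/
def psiC (τ η ξp ξm : ℂ) {N M : ℕ} (ℓ : Fin N → ℂ) (k : Fin M → Fin N) (i : Fin M) : ℂ :=
  xiP τ η ξp + xiM η ξm + τ + ℓ (k i) * η +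
    2 * ((∑ s ∈ Finset.univ.filter fun s : Fin N => k i < s, ℓ s) - (M : ℂ) + ((i : ℕ) + 1)) * η

/-- `u_{k;i}(x;t)`. -/
def ufun (τ η ξp ξm : ℂ) {N M : ℕ} (ℓ : Fin N → ℂ) (k : Fin M → Fin N) (i : Fin M) (x : ℂ)
    (t : Fin N → ℂ) : ℂ :=
  exp (-t (k i)) * theta (qsq τ) (exp (2 * (x - t (k i) + psiC τ η ξp ξm ℓ k i))) *
    (∏ s ∈ Finset.univ.filter fun s : Fin N => k i < s,
      theta (qsq τ) (exp (2 * (x - t s - ℓ s * η)))) /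
    ∏ s ∈ Finset.univ.filter fun s : Fin N => k i ≤ s,
      theta (qsq τ) (exp (2 * (x - t s + ℓ s * η)))

/-- `w_k(x;t)/Φ_k(t)` (the weight function with the `Φ_k` prefactor cancelled). -/
def w0 (τ η ξp ξm : ℂ) {N M : ℕ} (ℓ : Fin N → ℂ) (k : Fin M → Fin N) (x : Fin M → ℂ)
    (t : Fin N → ℂ) : ℂ :=
  (∏ i, Ffun τ η ℓ (x i) t * gfun τ η ξp ξm (x i) * ufun τ η ξp ξm ℓ k i (x i) t) *
    ∏ p ∈ Finset.univ.filter fun p : Fin M × Fin M => p.1 < p.2,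
      hfun τ η (x p.1 + x p.2) * hfun τ η (x p.1 - x p.2)

/-- the weight function `w_k(x;t)`. -/
def wfun (τ η ξp ξm : ℂ) {N M : ℕ} (ℓ : Fin N → ℂ) (k : Fin M → Fin N) (x : Fin M → ℂ)
    (t : Fin N → ℂ) : ℂ :=
  PhiF τ η ξp ξm ℓ k t * w0 τ η ξp ξm ℓ k x t

/-- sign `ε_i = ±1` encoded by a boolean. -/
def sg {M : ℕ} (ε : Fin M → Bool) (i : Fin M) : ℂ := if ε i then 1 else -1

/-- `S_M k`: rearrangements of `k`. -/
def rearr {M N : ℕ} (k : Fin M → Fin N) : Finset (Fin M → Fin N) :=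
  Finset.univ.filter fun m => ∀ r, nk m r = nk k r

/-- `β_k(x;t)`, the coefficients of the boundary Bethe vectors. -/
def betaF (η ξm : ℂ) {N M : ℕ} (ℓ : Fin N → ℂ) (k : Fin M → Fin N) (x : Fin M → ℂ)
    (t : Fin N → ℂ) : ℂ :=
  exp ((∑ i, ((nk k (k i) : ℂ) / 2 - ℓ (k i))) * η) *
    ∑ m ∈ rearr k, ∑ ε : Fin M → Bool,
      (∏ i,
          sg ε i * sinh (sg ε i * x i - xiM η ξm) / sinh (t (m i) + sg ε i * x i - ℓ (m i) * η) *
            (∏ s ∈ Finset.univ.filter fun s : Fin N => m i < s,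
              sinh (t s + sg ε i * x i + ℓ s * η) / sinh (t s + sg ε i * x i - ℓ s * η)) *
            ∏ s, sinh (t s - sg ε i * x i + ℓ s * η) / sinh (t s - sg ε i * x i - ℓ s * η)) *
        (∏ p ∈ Finset.univ.filter fun p : Fin M × Fin M => p.1 < p.2,
          sinh (sg ε p.1 * x p.1 + sg ε p.2 * x p.2 + η) /
            sinh (sg ε p.1 * x p.1 + sg ε p.2 * x p.2)) *
        ∏ p ∈ Finset.univ.filter fun p : Fin M × Fin M => m p.1 < m p.2,
          sinh (sg ε p.1 * x p.1 - sg ε p.2 * x p.2 - η) /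
            sinh (sg ε p.1 * x p.1 - sg ε p.2 * x p.2)

/-- `(ℓ,η) ∈ D^k_{M,N}`. -/
def Dmn (η : ℂ) {N M : ℕ} (ℓ : Fin N → ℂ) (k : Fin M → Fin N) : Prop :=
  ∀ r, (ℓ r * η).re > max 0 (((nk k r : ℝ) - 1) / 2 * η.re)

/-- the (0-based) position `i_k(s;r) = ∑_{s' < r} n_k(s') + s`. -/
def blockIdx {M N : ℕ} (k : Fin M → Fin N) (r : Fin N) (s : ℕ) : ℕ :=
  (∑ s' ∈ Finset.univ.filter fun s' : Fin N => s' < r, nk k s') + s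

/-- `γ ∈ Γ^k_{M,N}`. -/
def Gam (η : ℂ) {N M : ℕ} (ℓ : Fin N → ℂ) (k : Fin M → Fin N) (γ : Fin M → ℂ) : Prop :=
  (∀ i, -(ℓ (k i) * η).re < (γ i).re ∧ (γ i).re < (ℓ (k i) * η).re) ∧
    ∀ r : Fin N, ∀ s : ℕ, s + 1 < nk k r →
      ∀ (h1 : blockIdx k r s < M) (h2 : blockIdx k r (s + 1) < M),
        (γ ⟨blockIdx k r (s + 1), h2⟩).re ≤ (γ ⟨blockIdx k r s, h1⟩).re ∧
          (γ ⟨blockIdx k r (s + 1), h2⟩).re + η.re < (γ ⟨blockIdx k r s, h1⟩).re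

/-- `γ ∈ Γ^k_{M,N;τ}`. -/
def GamTau (τ η : ℂ) {N M : ℕ} (ℓ : Fin N → ℂ) (k : Fin M → Fin N) (γ : Fin M → ℂ) : Prop :=
  Gam η ℓ k γ ∧
    (∀ i, -(ℓ (k i) * η + τ).re < (γ i).re ∧ (γ i).re < (ℓ (k i) * η + τ).re) ∧
    ∀ r : Fin N, ∀ s : ℕ, s + 1 < nk k r →
      ∀ (h1 : blockIdx k r s < M) (h2 : blockIdx k r (s + 1) < M),
        (γ ⟨blockIdx k r (s + 1), h2⟩).re + (η - τ).re < (γ ⟨blockIdx k r s, h1⟩).re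

/-- `Λ₊ = max_s Re(ℓ_s η)`. -/
def Lam (η : ℂ) {N : ℕ} (ℓ : Fin N → ℂ) : ℝ := ⨆ s, (ℓ s * η).re

/-- the sector `Ã`. -/
def Atil (τ η ξp ξm : ℂ) {N : ℕ} (ℓ : Fin N → ℂ) : Set (Fin N → ℂ) :=
  {t | (∀ i j : Fin N, (j : ℕ) = (i : ℕ) + 1 → (t i - t j).re > 2 * Lam η ℓ + max η.re 0) ∧
       ∀ i : Fin N, (i : ℕ) = N - 1 →
         (t i).re > Lam η ℓ + max (max (η / 2).re 0) (max (-xiP τ η ξp).re (-xiM η ξm).re)}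

/-- the sector `Ã_τ`. -/
def AtilTau (τ η ξp ξm : ℂ) {N : ℕ} (ℓ : Fin N → ℂ) : Set (Fin N → ℂ) :=
  {t | (∀ i j : Fin N, (j : ℕ) = (i : ℕ) + 1 →
          (t i - t j).re > 2 * Lam η ℓ + max η.re 0 - τ.re) ∧
       ∀ i : Fin N, (i : ℕ) = N - 1 →
         (t i).re > Lam η ℓ + max (max (η / 2).re 0) (max (-xiP τ η ξp).re (-xiM η ξm).re) - τ.re}

/-- the cone `Q₊ ⊂ ℤ^N` spanned by the simple roots `e_i - e_{i+1}` and `e_N`. -/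
def Qplus {N : ℕ} : Set (Fin N → ℤ) :=
  {α | ∃ β : Fin N → ℕ, ∀ j : Fin N,
    α j = (β j : ℤ) -
      if _h : 0 < (j : ℕ) then
        (β ⟨(j : ℕ) - 1, lt_of_le_of_lt (Nat.sub_le _ _) j.isLt⟩ : ℤ)
      else 0}

/-- the cube `[0,π]^M` over which the contour integrals are iterated. -/
def box (M : ℕ) : Set (Fin M → ℝ) := Set.univ.pi fun _ => Set.Icc (0 : ℝ) Real.pi

/-- the point of the contour `C^γ_k(t)` with parameters `s ∈ [0,π]^M`. -/
def cpt {M N : ℕ} (k : Fin M → Fin N) (γ : Fin M → ℂ) (t : Fin N → ℂ) (s : Fin M → ℝ) :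
    Fin M → ℂ := fun i => t (k i) + γ i + (s i : ℂ) * I

/-- the iterated contour integral over `C^γ_k(t)`. -/
def contourIntegral {M N : ℕ} (k : Fin M → Fin N) (γ : Fin M → ℂ) (t : Fin N → ℂ)
    (f : (Fin M → ℂ) → ℂ) : ℂ :=
  I ^ M * ∫ s in box M, f (cpt k γ t s)

/-- nonvanishing of all denominators occurring in `w_k(x;t)/Φ_k(t)`. -/
def w0DenomOK (τ η ξp ξm : ℂ) {N M : ℕ} (ℓ : Fin N → ℂ) (k : Fin M → Fin N) (x : Fin M → ℂ)
    (t : Fin N → ℂ) : Prop :=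
  (∀ s : Fin N, ∀ i : Fin M,
      poch (qsq τ) (exp (-2 * (t s + x i + ℓ s * η))) ≠ 0 ∧
      poch (qsq τ) (exp (-2 * (t s - x i + ℓ s * η))) ≠ 0) ∧
  (∀ i : Fin M,
      poch (qsq τ) (exp (2 * (-xiP τ η ξp - x i))) ≠ 0 ∧
      poch (qsq τ) (exp (2 * (-xiM η ξm - x i))) ≠ 0) ∧
  (∀ i : Fin M, ∀ s : Fin N, k i ≤ s → theta (qsq τ) (exp (2 * (x i - t s + ℓ s * η))) ≠ 0) ∧
  ∀ i j : Fin M, i < j →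
      poch (qsq τ) (exp (-2 * (x i + x j - η))) ≠ 0 ∧
      poch (qsq τ) (exp (-2 * (x i - x j - η))) ≠ 0

/-- nonvanishing of the theta denominators of `Φ_k(t)`. -/
def PhiDenomOK (τ η ξp ξm : ℂ) {N M : ℕ} (ℓ : Fin N → ℂ) (k : Fin M → Fin N)
    (t : Fin N → ℂ) : Prop :=
  ∀ r, theta (qsq τ) (phiC η ξp ξm ℓ k r * exp (2 * t r)) ≠ 0

/-- nonvanishing of all sinh denominators occurring in `β_m(x;t)` (for any rearrangement `m`). -/
def betaDenomOK (η : ℂ) {N M : ℕ} (ℓ : Fin N → ℂ) (x : Fin M → ℂ) (t : Fin N → ℂ) : Prop :=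
  (∀ s : Fin N, ∀ i : Fin M,
      sinh (t s + x i - ℓ s * η) ≠ 0 ∧ sinh (t s - x i - ℓ s * η) ≠ 0) ∧
  ∀ i j : Fin M, i < j → sinh (x i + x j) ≠ 0 ∧ sinh (x i - x j) ≠ 0

/-! Everything reduces to `(z;p)_∞ = (1 - z) (pz;p)_∞`: in the variable `z = e^{-2y}` the shift
`y ↦ y - τ` of a shifted factorial costs a factor `2 e^{-y} sinh y`, so each quotient of shifted
factorials in `F`, `g` and `h` acquires a quotient of hyperbolic sines and an exponential, while
theta quotients only acquire exponentials. In `F` the exponentials cancel. A pair `(j, i)` with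
`j < i` yields `e^{4η}`, a pair `(i, j)` with `i < j` yields none, and the `M - j` resulting factors
`e^{4η}` cancel against the exponentials of `g` and `u_{k;j}`. -/

section Products

variable {ι α R : Type*} [Fintype ι] [CommMonoid R]

theorem prod_update_eq_mul_prod [DecidableEq ι] {f : ι → α → R} {x : ι → α} {j : ι} {y : α}
    {c : R} (hc : f j y = c * f j (x j)) :
    ∏ i, f i (Function.update x j y i) = c * ∏ i, f i (x i) := by
  rw [← Finset.mul_prod_erase _ _ (Finset.mem_univ j),
    ← Finset.mul_prod_erase _ (fun i => f i (x i)) (Finset.mem_univ j), ← mul_assoc,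
    Function.update_self, hc]
  congr 1
  refine Finset.prod_congr rfl fun i hi => ?_
  rw [Function.update_of_ne (Finset.ne_of_mem_erase hi)]

variable [LinearOrder ι]

theorem prod_pairs_lt_ite_snd (c : ι → R) (j : ι) :
    (∏ p : ι × ι with p.1 < p.2, if p.2 = j then c p.1 else 1) = ∏ i with i < j, c i := by
  simp only [Finset.prod_filter, Fintype.prod_prod_type]
  refine Finset.prod_congr rfl fun a _ => ?_
  rw [Fintype.prod_eq_single j fun b hb => by simp only [if_neg hb, ite_self], if_pos rfl]

theorem prod_pairs_lt_ite_fst (c : ι → R) (j : ι) :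
    (∏ p : ι × ι with p.1 < p.2, if p.1 = j then c p.2 else 1) = ∏ i with j < i, c i := by
  simp only [Finset.prod_filter, Fintype.prod_prod_type_right]
  refine Finset.prod_congr rfl fun b _ => ?_
  rw [Fintype.prod_eq_single j fun a ha => by simp only [if_neg ha, ite_self], if_pos rfl]

theorem prod_pairs_lt_update_eq_mul {f : α → α → R} {x : ι → α} {j : ι} {y : α} {c d : ι → R}
    (hc : ∀ i < j, f (x i) y = c i * f (x i) (x j))
    (hd : ∀ i, j < i → f y (x i) = d i * f (x j) (x i)) :
    ∏ p : ι × ι with p.1 < p.2, f (Function.update x j y p.1) (Function.update x j y p.2) =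
      (∏ i with i < j, c i) * (∏ i with j < i, d i) *
        ∏ p : ι × ι with p.1 < p.2, f (x p.1) (x p.2) := by
  rw [← prod_pairs_lt_ite_snd, ← prod_pairs_lt_ite_fst, ← Finset.prod_mul_distrib,
    ← Finset.prod_mul_distrib]
  refine Finset.prod_congr rfl fun ⟨a, b⟩ hp => ?_
  have hab : a < b := (Finset.mem_filter.mp hp).2
  by_cases hb : b = j
  · subst hb
    simp [hab.ne, hc a hab]
  · by_cases ha : a = j
    · subst ha
      simp [hb, hd b hab]
    · simp [ha, hb]

theorem prod_lt_mul_prod_gt_const_mul (c : ι → R) (e : R) (j : ι) :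
    (∏ i with i < j, c i) * ∏ i with j < i, e * c i =
      e ^ (Finset.univ.filter (j < ·)).card * ∏ i with i ≠ j, c i := by
  have hne : Finset.univ.filter (· ≠ j) =
      Finset.univ.filter (· < j) ∪ Finset.univ.filter (j < ·) := by
    ext i; simp [lt_or_lt_iff_ne]
  have hdisj : Disjoint (Finset.univ.filter (· < j)) (Finset.univ.filter (j < ·)) :=
    Finset.disjoint_filter.mpr fun _ _ => lt_asymm
  rw [hne, Finset.prod_union hdisj, Finset.prod_mul_distrib, Finset.prod_const, mul_left_comm]

end Products

section ShiftedFactorials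

variable {p : ℂ}

theorem multipliable_one_sub_mul_pow (hp : ‖p‖ < 1) (z : ℂ) :
    Multipliable fun m : ℕ => 1 - z * p ^ m := by
  simp only [sub_eq_add_neg]
  refine multipliable_one_add_of_summable ?_
  simpa only [norm_neg, norm_mul, norm_pow] using
    (summable_geometric_of_lt_one (norm_nonneg p) hp).mul_left ‖z‖

theorem poch_eq_one_sub_mul_poch (hp : ‖p‖ < 1) (z : ℂ) :
    poch p z = (1 - z) * poch p (p * z) := by
  have htail (m : ℕ) : 1 - z * p ^ (m + 1) = 1 - p * z * p ^ m := by ring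
  have hmul : Multipliable fun m : ℕ => 1 - z * p ^ (m + 1) := by
    simpa only [htail] using multipliable_one_sub_mul_pow hp (p * z)
  rw [poch, tprod_eq_zero_mul' (f := fun m : ℕ => 1 - z * p ^ m) hmul, pow_zero, mul_one, poch]
  simp only [htail]

theorem theta_eq_neg_mul_theta (hp : ‖p‖ < 1) (hp₀ : p ≠ 0) {z : ℂ} (hz : z ≠ 0) :
    theta p z = -z * theta p (p * z) := by
  have hinv : p * (p * z)⁻¹ = z⁻¹ := by field_simp
  have hsign : 1 - z = -z * (1 - z⁻¹) := by field_simp; ring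
  rw [theta, theta, hinv, poch_eq_one_sub_mul_poch hp z, poch_eq_one_sub_mul_poch hp z⁻¹, hsign]
  ring

end ShiftedFactorials

section AdditiveVariable

variable {τ : ℂ}

/-- The shifted factorial `(e^{-2y};q²)_∞` in the additive variable `y`, for which multiplication of
the argument by `q²` becomes the translation `y ↦ y - τ`. -/
def pochExp (τ y : ℂ) : ℂ := poch (qsq τ) (exp (-2 * y))

/-- The theta function `θ(e^{2y})` in the additive variable `y`. -/
def thetaExp (τ y : ℂ) : ℂ := theta (qsq τ) (exp (2 * y))

theorem norm_qsq_lt_one (hτ : τ.re < 0) : ‖qsq τ‖ < 1 := by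
  rw [qsq, norm_exp, Real.exp_lt_one_iff, mul_re, re_ofNat, im_ofNat]
  linarith

theorem qsq_mul_exp (τ z : ℂ) : qsq τ * exp z = exp (2 * τ + z) := (exp_add _ _).symm

theorem one_sub_exp_neg_two_mul (y : ℂ) : 1 - exp (-2 * y) = 2 * exp (-y) * sinh y := by
  have hsq : exp (-2 * y) = exp (-y) * exp (-y) := by rw [← exp_add]; ring_nf
  have hinv : exp (-y) * exp y = 1 := by rw [← exp_add, neg_add_cancel, exp_zero]
  rw [sinh, hsq]
  linear_combination -hinv

theorem pochExp_add (hτ : τ.re < 0) (y : ℂ) :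
    pochExp τ (y + τ) = 2 * exp (-(y + τ)) * sinh (y + τ) * pochExp τ y := by
  rw [pochExp, poch_eq_one_sub_mul_poch (norm_qsq_lt_one hτ), one_sub_exp_neg_two_mul, qsq_mul_exp,
    pochExp]
  ring_nf

theorem sinh_ne_zero_of_pochExp_ne_zero (hτ : τ.re < 0) {y : ℂ} (hy : pochExp τ y ≠ 0) :
    sinh y ≠ 0 := by
  contrapose! hy
  rw [← sub_add_cancel y τ, pochExp_add hτ, sub_add_cancel, hy, mul_zero, zero_mul]

theorem pochExp_add_div_add (hτ : τ.re < 0) (a b : ℂ) :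
    pochExp τ (a + τ) / pochExp τ (b + τ) =
      exp (b - a) * (sinh (a + τ) / sinh (b + τ)) * (pochExp τ a / pochExp τ b) := by
  have hexp : exp (b - a) = exp (-(a + τ)) / exp (-(b + τ)) := by rw [← exp_sub]; ring_nf
  rw [pochExp_add hτ, pochExp_add hτ, hexp, mul_div_mul_comm, mul_div_mul_comm, mul_div_mul_left]
  exact two_ne_zero

theorem pochExp_sub_div_sub (hτ : τ.re < 0) {a b : ℂ} (ha : sinh a ≠ 0) (hb : sinh b ≠ 0) :
    pochExp τ (a - τ) / pochExp τ (b - τ) =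
      exp (a - b) * (sinh b / sinh a) * (pochExp τ a / pochExp τ b) := by
  have hadd := pochExp_add_div_add hτ (a - τ) (b - τ)
  rw [sub_add_cancel, sub_add_cancel, sub_sub_sub_cancel_right] at hadd
  have hexp : exp (a - b) * exp (b - a) = 1 := by
    rw [← exp_add, sub_add_sub_cancel, sub_self, exp_zero]
  have hsinh : sinh b / sinh a * (sinh a / sinh b) = 1 := by field_simp
  rw [hadd]
  linear_combination -(pochExp τ (a - τ) / pochExp τ (b - τ)) *
    (hexp * (sinh b / sinh a * (sinh a / sinh b)) + hsinh)

theorem thetaExp_sub (hτ : τ.re < 0) (y : ℂ) :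
    thetaExp τ (y - τ) = -exp (2 * (y - τ)) * thetaExp τ y := by
  rw [thetaExp, theta_eq_neg_mul_theta (norm_qsq_lt_one hτ) (exp_ne_zero _) (exp_ne_zero _),
    qsq_mul_exp, thetaExp]
  ring_nf

theorem thetaExp_sub_div_sub (hτ : τ.re < 0) (a b : ℂ) :
    thetaExp τ (a - τ) / thetaExp τ (b - τ) =
      exp (2 * (a - b)) * (thetaExp τ a / thetaExp τ b) := by
  rw [thetaExp_sub hτ, thetaExp_sub hτ, mul_div_mul_comm, neg_div_neg_eq, ← exp_sub]
  ring_nf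

end AdditiveVariable

section FactorsOfTheWeightFunction

variable {τ η ξp ξm : ℂ} {M N : ℕ} {ℓ : Fin N → ℂ} {x : ℂ} {t : Fin N → ℂ}

theorem Ffun_eq_prod_pochExp_div :
    Ffun τ η ℓ x t =
      ∏ s, pochExp τ (t s + x - ℓ s * η) / pochExp τ (t s + x + ℓ s * η) *
        (pochExp τ (t s - x - ℓ s * η) / pochExp τ (t s - x + ℓ s * η)) := by
  simp only [Ffun, mul_div_mul_comm, pochExp]

theorem Ffun_sub (hτ : τ.re < 0) (hadd : ∀ s, sinh (t s + x + ℓ s * η) ≠ 0)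
    (hsub : ∀ s, sinh (t s + x - ℓ s * η) ≠ 0) :
    Ffun τ η ℓ (x - τ) t =
      (∏ s, sinh (t s + x + ℓ s * η) / sinh (t s + x - ℓ s * η) *
          (sinh (t s - x - ℓ s * η + τ) / sinh (t s - x + ℓ s * η + τ))) * Ffun τ η ℓ x t := by
  rw [Ffun_eq_prod_pochExp_div, Ffun_eq_prod_pochExp_div, ← Finset.prod_mul_distrib]
  refine Finset.prod_congr rfl fun s _ => ?_
  have hexp : exp (t s + x - ℓ s * η - (t s + x + ℓ s * η)) *
      exp (t s - x + ℓ s * η - (t s - x - ℓ s * η)) = 1 := by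
    rw [← exp_add, ← exp_zero]; ring_nf
  rw [show t s + (x - τ) - ℓ s * η = t s + x - ℓ s * η - τ by ring,
    show t s + (x - τ) + ℓ s * η = t s + x + ℓ s * η - τ by ring,
    show t s - (x - τ) - ℓ s * η = t s - x - ℓ s * η + τ by ring,
    show t s - (x - τ) + ℓ s * η = t s - x + ℓ s * η + τ by ring,
    pochExp_sub_div_sub hτ (hsub s) (hadd s), pochExp_add_div_add hτ,
    mul_mul_mul_comm, mul_mul_mul_comm (exp _), hexp, one_mul]

theorem poch_exp_two_mul_neg_sub (b : ℂ) :
    poch (qsq τ) (exp (2 * (-b - x))) = pochExp τ (x + b) := by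
  rw [pochExp]; ring_nf

theorem gfun_eq_pochExp_div :
    gfun τ η ξp ξm x =
      pochExp τ (x - xiP τ η ξp - τ) / pochExp τ (x + xiP τ η ξp) *
        (pochExp τ (x - xiM η ξm - τ) / pochExp τ (x + xiM η ξm)) := by
  have hnum (b : ℂ) : poch (qsq τ) (qsq τ * exp (2 * (b - x))) = pochExp τ (x - b - τ) := by
    rw [qsq_mul_exp, pochExp]; ring_nf
  rw [gfun, hnum, hnum, poch_exp_two_mul_neg_sub, poch_exp_two_mul_neg_sub, mul_div_mul_comm]

theorem gfun_sub (hτ : τ.re < 0)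
    (haddP : sinh (x + xiP τ η ξp) ≠ 0) (haddM : sinh (x + xiM η ξm) ≠ 0)
    (hsubP : sinh (x - xiP τ η ξp - τ) ≠ 0) (hsubM : sinh (x - xiM η ξm - τ) ≠ 0) :
    gfun τ η ξp ξm (x - τ) = exp (-2 * (xiP τ η ξp + xiM η ξm + τ)) *
      (sinh (x + xiP τ η ξp) / sinh (x - xiP τ η ξp - τ)) *
      (sinh (x + xiM η ξm) / sinh (x - xiM η ξm - τ)) * gfun τ η ξp ξm x := by
  have hexp : exp (-2 * (xiP τ η ξp + xiM η ξm + τ)) =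
      exp (x - xiP τ η ξp - τ - (x + xiP τ η ξp)) *
        exp (x - xiM η ξm - τ - (x + xiM η ξm)) := by
    rw [← exp_add]; ring_nf
  simp only [gfun_eq_pochExp_div, sub_right_comm x τ, sub_add_eq_add_sub x τ,
    pochExp_sub_div_sub hτ hsubP haddP, pochExp_sub_div_sub hτ hsubM haddM, hexp]
  ring

theorem ufun_eq_thetaExp_div (k : Fin M → Fin N) (i : Fin M) :
    ufun τ η ξp ξm ℓ k i x t = exp (-t (k i)) *
      (thetaExp τ (x - t (k i) + psiC τ η ξp ξm ℓ k i) /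
        thetaExp τ (x - t (k i) + ℓ (k i) * η)) *
      ∏ s with k i < s, thetaExp τ (x - t s - ℓ s * η) / thetaExp τ (x - t s + ℓ s * η) := by
  have hset : Finset.univ.filter (k i ≤ ·) = insert (k i) (Finset.univ.filter (k i < ·)) := by
    ext s; simp [le_iff_eq_or_lt, eq_comm]
  rw [ufun, hset, Finset.prod_insert (by simp), mul_div_mul_comm, mul_div_assoc,
    Finset.prod_div_distrib]
  rfl

theorem ufun_sub (hτ : τ.re < 0) (k : Fin M → Fin N) (i : Fin M) :
    ufun τ η ξp ξm ℓ k i (x - τ) t = exp (2 * (xiP τ η ξp + xiM η ξm + τ) +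
      4 * ((i : ℕ) + 1 - M : ℂ) * η) * ufun τ η ξp ξm ℓ k i x t := by
  have hprod : ∏ s with k i < s, thetaExp τ (x - τ - t s - ℓ s * η) /
        thetaExp τ (x - τ - t s + ℓ s * η) =
      exp (∑ s with k i < s, -4 * ℓ s * η) *
        ∏ s with k i < s, thetaExp τ (x - t s - ℓ s * η) / thetaExp τ (x - t s + ℓ s * η) := by
    rw [exp_sum, ← Finset.prod_mul_distrib]
    refine Finset.prod_congr rfl fun s _ => ?_
    rw [show x - τ - t s - ℓ s * η = x - t s - ℓ s * η - τ by ring,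
      show x - τ - t s + ℓ s * η = x - t s + ℓ s * η - τ by ring, thetaExp_sub_div_sub hτ]
    ring_nf
  have hexp : exp (2 * (xiP τ η ξp + xiM η ξm + τ) + 4 * ((i : ℕ) + 1 - M : ℂ) * η) =
      exp (2 * (x - t (k i) + psiC τ η ξp ξm ℓ k i - (x - t (k i) + ℓ (k i) * η))) *
        exp (∑ s with k i < s, -4 * ℓ s * η) := by
    rw [← exp_add, psiC, ← Finset.sum_mul, ← Finset.mul_sum]
    ring_nf
  rw [ufun_eq_thetaExp_div, ufun_eq_thetaExp_div, hprod,
    show x - τ - t (k i) + psiC τ η ξp ξm ℓ k i = x - t (k i) + psiC τ η ξp ξm ℓ k i - τ by ring,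
    show x - τ - t (k i) + ℓ (k i) * η = x - t (k i) + ℓ (k i) * η - τ by ring,
    thetaExp_sub_div_sub hτ, hexp]
  ring

/-- The part of the coefficient of the functional equation that depends on the shifted variable
`x = x_j` alone, coming from `F`, `g` and `u_{k;j}`. -/
def oneBodyCoeff (τ η ξp ξm : ℂ) (ℓ t : Fin N → ℂ) (x : ℂ) : ℂ :=
  (∏ s, sinh (t s + x + ℓ s * η) / sinh (t s + x - ℓ s * η) *
      (sinh (t s - x - ℓ s * η + τ) / sinh (t s - x + ℓ s * η + τ))) *
    (sinh (x + xiP τ η ξp) / sinh (x - xiP τ η ξp - τ)) *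
    (sinh (x + xiM η ξm) / sinh (x - xiM η ξm - τ))

theorem Ffun_mul_gfun_mul_ufun_sub (hτ : τ.re < 0) (k : Fin M → Fin N) (i : Fin M)
    (hFadd : ∀ s, sinh (t s + x + ℓ s * η) ≠ 0) (hFsub : ∀ s, sinh (t s + x - ℓ s * η) ≠ 0)
    (haddP : sinh (x + xiP τ η ξp) ≠ 0) (haddM : sinh (x + xiM η ξm) ≠ 0)
    (hsubP : sinh (x - xiP τ η ξp - τ) ≠ 0) (hsubM : sinh (x - xiM η ξm - τ) ≠ 0) :
    Ffun τ η ℓ (x - τ) t * gfun τ η ξp ξm (x - τ) * ufun τ η ξp ξm ℓ k i (x - τ) t =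
      oneBodyCoeff τ η ξp ξm ℓ t x * exp (4 * ((i : ℕ) + 1 - M : ℂ) * η) *
        (Ffun τ η ℓ x t * gfun τ η ξp ξm x * ufun τ η ξp ξm ℓ k i x t) := by
  have hexp : exp (4 * ((i : ℕ) + 1 - M : ℂ) * η) =
      exp (-2 * (xiP τ η ξp + xiM η ξm + τ)) *
        exp (2 * (xiP τ η ξp + xiM η ξm + τ) + 4 * ((i : ℕ) + 1 - M : ℂ) * η) := by
    rw [← exp_add]; ring_nf
  rw [Ffun_sub hτ hFadd hFsub, gfun_sub hτ haddP haddM hsubP hsubM, ufun_sub hτ, hexp, oneBodyCoeff]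
  ring

end FactorsOfTheWeightFunction

section PairFactors

variable {τ η : ℂ}

theorem hfun_eq_sinh_mul_pochExp_div (y : ℂ) :
    hfun τ η y = 2 * exp (-y) * sinh y * (pochExp τ (y + η - τ) / pochExp τ (y - η)) := by
  rw [hfun, one_sub_exp_neg_two_mul, mul_div_assoc, qsq_mul_exp, pochExp, pochExp]
  ring_nf

/-- The hyperbolic factor that `h(y)` acquires under `y ↦ y - τ`; `h(-y)` acquires the same one
under this shift. -/
def hCoeff (τ η y : ℂ) : ℂ := sinh (y - τ) / sinh y * (sinh (y - η) / sinh (y + η - τ))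

theorem hfun_sub (hτ : τ.re < 0) {y : ℂ} (hy : sinh y ≠ 0) (hsub : sinh (y - η) ≠ 0)
    (hadd : sinh (y + η - τ) ≠ 0) :
    hfun τ η (y - τ) = exp (2 * η) * hCoeff τ η y * hfun τ η y := by
  have hexp : exp (-(y - τ)) * exp (y + η - τ - (y - η)) = exp (2 * η) * exp (-y) := by
    rw [← exp_add, ← exp_add]; ring_nf
  have hsinh : sinh (y - τ) = sinh (y - τ) / sinh y * sinh y := (div_mul_cancel₀ _ hy).symm
  rw [hfun_eq_sinh_mul_pochExp_div, hsinh, hfun_eq_sinh_mul_pochExp_div, hCoeff,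
    sub_add_eq_add_sub, sub_right_comm y, pochExp_sub_div_sub hτ hadd hsub]
  linear_combination (2 * (sinh (y - τ) / sinh y * sinh y) * (sinh (y - η) / sinh (y + η - τ)) *
    (pochExp τ (y + η - τ) / pochExp τ (y - η))) * hexp

theorem hfun_neg_sub (hτ : τ.re < 0) {y : ℂ} (hy : sinh y ≠ 0) :
    hfun τ η (-(y - τ)) = exp (-(2 * η)) * hCoeff τ η y * hfun τ η (-y) := by
  have hexp : exp (y - τ) * exp (-y - η - (-y + η - τ)) = exp (-(2 * η)) * exp y := by
    rw [← exp_add, ← exp_add]; ring_nf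
  have hsinh : sinh (y - τ) = sinh (y - τ) / sinh y * sinh y := (div_mul_cancel₀ _ hy).symm
  have hratio : pochExp τ (-(y - τ) + η - τ) / pochExp τ (-(y - τ) - η) =
      exp (-y - η - (-y + η - τ)) * (sinh (y - η) / sinh (y + η - τ)) *
        (pochExp τ (-y + η - τ) / pochExp τ (-y - η)) := by
    rw [show -(y - τ) + η - τ = -y + η - τ + τ by ring, show -(y - τ) - η = -y - η + τ by ring,
      pochExp_add_div_add hτ, show -y + η - τ + τ = -(y - η) by ring,
      show -y - η + τ = -(y + η - τ) by ring, sinh_neg, sinh_neg, neg_div_neg_eq]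
  rw [hfun_eq_sinh_mul_pochExp_div, hratio, neg_neg, sinh_neg, hsinh, hfun_eq_sinh_mul_pochExp_div,
    neg_neg, sinh_neg, hCoeff]
  linear_combination (-2 * (sinh (y - τ) / sinh y * sinh y) * (sinh (y - η) / sinh (y + η - τ)) *
    (pochExp τ (-y + η - τ) / pochExp τ (-y - η))) * hexp

/-- The part of the coefficient of the functional equation that depends on the shifted variable
`a = x_j` and on one further variable `b = x_i`, coming from `h(x_i + x_j) h(x_i - x_j)`. -/
def pairCoeff (τ η a b : ℂ) : ℂ :=
  sinh (a + b - τ) / sinh (a + b) * (sinh (a - b - τ) / sinh (a - b)) *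
    (sinh (a + b - η) / sinh (a + b + η - τ)) * (sinh (a - b - η) / sinh (a - b + η - τ))

theorem pairCoeff_eq_hCoeff_mul (a b : ℂ) :
    pairCoeff τ η a b = hCoeff τ η (a + b) * hCoeff τ η (a - b) := by
  rw [pairCoeff, hCoeff, hCoeff]; ring

variable {a b : ℂ}

theorem hfun_mul_hfun_sub_left (hτ : τ.re < 0)
    (hadd : sinh (a + b) ≠ 0) (hsub : sinh (a - b) ≠ 0)
    (haddη : sinh (a + b - η) ≠ 0) (hsubη : sinh (a - b - η) ≠ 0)
    (haddητ : sinh (a + b + η - τ) ≠ 0) (hsubητ : sinh (a - b + η - τ) ≠ 0) :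
    hfun τ η (a - τ + b) * hfun τ η (a - τ - b) =
      exp (4 * η) * pairCoeff τ η a b * (hfun τ η (a + b) * hfun τ η (a - b)) := by
  have hexp : exp (4 * η) = exp (2 * η) * exp (2 * η) := by rw [← exp_add]; ring_nf
  rw [sub_add_eq_add_sub, sub_right_comm, hfun_sub hτ hadd haddη haddητ,
    hfun_sub hτ hsub hsubη hsubητ, hexp, pairCoeff_eq_hCoeff_mul]
  ring

theorem hfun_mul_hfun_sub_right (hτ : τ.re < 0)
    (hadd : sinh (b + a) ≠ 0) (hsub : sinh (b - a) ≠ 0)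
    (haddη : sinh (b + a - η) ≠ 0) (haddητ : sinh (b + a + η - τ) ≠ 0) :
    hfun τ η (a + (b - τ)) * hfun τ η (a - (b - τ)) =
      pairCoeff τ η b a * (hfun τ η (a + b) * hfun τ η (a - b)) := by
  have hexp : exp (2 * η) * exp (-(2 * η)) = 1 := by
    rw [← exp_add, add_neg_cancel, exp_zero]
  rw [show a + (b - τ) = b + a - τ by ring, show a - (b - τ) = -(b - a - τ) by ring,
    hfun_sub hτ hadd haddη haddητ, hfun_neg_sub hτ hsub, neg_sub, add_comm a b,
    pairCoeff_eq_hCoeff_mul]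
  linear_combination (hCoeff τ η (b + a) * hCoeff τ η (b - a) *
    (hfun τ η (b + a) * hfun τ η (a - b))) * hexp

end PairFactors

section FunctionalEquation

variable {M N : ℕ}

theorem exp_mul_exp_pow_card_gt (η : ℂ) (j : Fin M) :
    exp (4 * ((j : ℕ) + 1 - M : ℂ) * η) * exp (4 * η) ^ (Finset.univ.filter (j < ·)).card = 1 := by
  have hcard : ((Finset.univ.filter (j < ·)).card : ℂ) = M - (j + 1) := by
    rw [Finset.filter_lt_eq_Ioi, Fin.card_Ioi, Nat.sub_sub, Nat.add_comm 1,
      Nat.cast_sub (Nat.succ_le_of_lt j.isLt), Nat.cast_succ]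
  rw [← exp_nat_mul, ← exp_add, hcard, ← exp_zero]
  ring_nf

theorem sinh_ne_zero_of_w0DenomOK {τ η ξp ξm : ℂ} (hτ : τ.re < 0) {ℓ : Fin N → ℂ}
    {k : Fin M → Fin N} {x : Fin M → ℂ} {t : Fin N → ℂ} (hw : w0DenomOK τ η ξp ξm ℓ k x t) :
    (∀ s i, sinh (t s + x i + ℓ s * η) ≠ 0) ∧
      (∀ i, sinh (x i + xiP τ η ξp) ≠ 0 ∧ sinh (x i + xiM η ξm) ≠ 0) ∧
      ∀ i j, i < j → sinh (x i + x j - η) ≠ 0 ∧ sinh (x i - x j - η) ≠ 0 := by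
  obtain ⟨hF, hg, -, hh⟩ := hw
  simp only [poch_exp_two_mul_neg_sub] at hg
  exact ⟨fun s i => sinh_ne_zero_of_pochExp_ne_zero hτ (hF s i).1,
    fun i => (hg i).imp (sinh_ne_zero_of_pochExp_ne_zero hτ) (sinh_ne_zero_of_pochExp_ne_zero hτ),
    fun i j hij => (hh i j hij).imp (sinh_ne_zero_of_pochExp_ne_zero hτ)
      (sinh_ne_zero_of_pochExp_ne_zero hτ)⟩

theorem stmt12_general {τ η ξp ξm : ℂ} (hτ : τ.re < 0) (ℓ : Fin N → ℂ) (k : Fin M → Fin N)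
    (j : Fin M) (x : Fin M → ℂ) (t : Fin N → ℂ)
    (hw : w0DenomOK τ η ξp ξm ℓ k x t)
    (hF : ∀ s, sinh (t s + x j - ℓ s * η) ≠ 0)
    (_hF' : ∀ s, sinh (t s - x j + ℓ s * η + τ) ≠ 0)
    (hgP : sinh (x j - xiP τ η ξp - τ) ≠ 0) (hgM : sinh (x j - xiM η ξm - τ) ≠ 0)
    (hh : ∀ i, i ≠ j →
      sinh (x j + x i) ≠ 0 ∧ sinh (x j - x i) ≠ 0 ∧
      sinh (x j + x i + η - τ) ≠ 0 ∧ sinh (x j - x i + η - τ) ≠ 0) :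
    w0 τ η ξp ξm ℓ k (Function.update x j (x j - τ)) t =
      oneBodyCoeff τ η ξp ξm ℓ t (x j) * (∏ i with i ≠ j, pairCoeff τ η (x j) (x i)) *
        w0 τ η ξp ξm ℓ k x t := by
  obtain ⟨hwF, hwg, hwh⟩ := sinh_ne_zero_of_w0DenomOK hτ hw
  have honeBody := Ffun_mul_gfun_mul_ufun_sub hτ k j (hwF · j) hF (hwg j).1 (hwg j).2 hgP hgM
  have hpairBelow (i : Fin M) (hij : i < j) :=
    have ⟨hadd, hsub, hadd', _⟩ := hh i hij.ne
    hfun_mul_hfun_sub_right hτ hadd hsub (add_comm (x i) (x j) ▸ (hwh i j hij).1) hadd'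
  have hpairAbove (i : Fin M) (hji : j < i) :=
    have ⟨hadd, hsub, hadd', hsub'⟩ := hh i hji.ne'
    hfun_mul_hfun_sub_left hτ hadd hsub (hwh j i hji).1 (hwh j i hji).2 hadd' hsub'
  rw [w0, w0,
    prod_update_eq_mul_prod
      (f := fun i z => Ffun τ η ℓ z t * gfun τ η ξp ξm z * ufun τ η ξp ξm ℓ k i z t) honeBody,
    prod_pairs_lt_update_eq_mul (f := fun a b => hfun τ η (a + b) * hfun τ η (a - b))
      hpairBelow hpairAbove,
    prod_lt_mul_prod_gt_const_mul, mul_mul_mul_comm, mul_assoc (oneBodyCoeff ..) (exp _),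
    ← mul_assoc (exp _), exp_mul_exp_pow_card_gt, one_mul]

end FunctionalEquation

/-- functional equation `w_k(x − τ e_j; t) = (⋯) w_k(x;t)`. -/
theorem stmt12 (τ η ξp ξm : ℂ) (hτ : τ.re < 0) (M N : ℕ) (hN : 1 ≤ N)
    (ℓ : Fin N → ℂ) (k : Fin M → Fin N) (hk : Monotone k) (j : Fin M)
    (x : Fin M → ℂ) (t : Fin N → ℂ)
    (hw : w0DenomOK τ η ξp ξm ℓ k x t)
    (hw' : w0DenomOK τ η ξp ξm ℓ k (fun i => x i - if i = j then τ else 0) t)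
    (hΦ : PhiDenomOK τ η ξp ξm ℓ k t)
    (hd1 : ∀ s : Fin N, sinh (t s + x j - ℓ s * η) ≠ 0)
    (hd2 : ∀ s : Fin N, sinh (t s - x j + ℓ s * η + τ) ≠ 0)
    (hd3 : sinh (x j - xiP τ η ξp - τ) ≠ 0) (hd4 : sinh (x j - xiM η ξm - τ) ≠ 0)
    (hd5 : ∀ i : Fin M, i ≠ j →
      sinh (x j + x i) ≠ 0 ∧ sinh (x j - x i) ≠ 0 ∧
      sinh (x j + x i + η - τ) ≠ 0 ∧ sinh (x j - x i + η - τ) ≠ 0) :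
    wfun τ η ξp ξm ℓ k (fun i => x i - if i = j then τ else 0) t =
      (∏ s, sinh (t s + x j + ℓ s * η) / sinh (t s + x j - ℓ s * η) *
          (sinh (t s - x j - ℓ s * η + τ) / sinh (t s - x j + ℓ s * η + τ))) *
        (sinh (x j + xiP τ η ξp) / sinh (x j - xiP τ η ξp - τ)) *
        (sinh (x j + xiM η ξm) / sinh (x j - xiM η ξm - τ)) *
        (∏ i ∈ Finset.univ.filter fun i : Fin M => i ≠ j,
          sinh (x j + x i - τ) / sinh (x j + x i) *
            (sinh (x j - x i - τ) / sinh (x j - x i)) *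
            (sinh (x j + x i - η) / sinh (x j + x i + η - τ)) *
            (sinh (x j - x i - η) / sinh (x j - x i + η - τ))) *
        wfun τ η ξp ξm ℓ k x t := by
  have hshift : (fun i => x i - if i = j then τ else 0) = Function.update x j (x j - τ) := by
    ext i; by_cases hij : i = j <;> simp [hij]
  rw [wfun, wfun, hshift, stmt12_general hτ ℓ k j x t hw hd1 hd2 hd3 hd4 hd5]
  exact mul_left_comm _ _ _

end BQKZ
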